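/- Let Δ be a simplicial complex on [n]. If Δ has a shedding vertex v such that both link_Δ(v) and del_Δ(v) are sequentially Cohen-Macaulay, then Δ is sequentially Cohen-Macaulay. -/

import Mathlib

open MvPolynomial

namespace Paper

/-- An (abstract) simplicial complex: a nonempty, downward closed collection of
finite subsets of the vertex set. -/
def IsComplex {n : ℕ} (Δ : Set (Finset (Fin n))) : Prop :=
  Δ.Nonempty ∧ ∀ F ∈ Δ, ∀ G, G ⊆ F → G ∈ Δ

/-- The deletion `del_Δ(v)`. -/
def delC {n : ℕ} (Δ : Set (Finset (Fin n))) (v : Fin n) : Set (Finset (Fin n)) :=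
  {G ∈ Δ | v ∉ G}

/-- The link `link_Δ(v)`. -/
def linkC {n : ℕ} (Δ : Set (Finset (Fin n))) (v : Fin n) : Set (Finset (Fin n)) :=
  {G | G ∈ Δ ∧ v ∉ G ∧ insert v G ∈ Δ}

/-- A facet is a maximal face. -/
def IsFacet {n : ℕ} (Δ : Set (Finset (Fin n))) (F : Finset (Fin n)) : Prop :=
  F ∈ Δ ∧ ∀ G ∈ Δ, F ⊆ G → G = F

/-- A vertex `v` of `Δ` is a shedding vertex if every facet of `del_Δ(v)` is a facet
of `Δ`. -/
def IsSheddingVertex {n : ℕ} (Δ : Set (Finset (Fin n))) (v : Fin n) : Prop :=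
  {v} ∈ Δ ∧ ∀ F, IsFacet (delC Δ v) F → IsFacet Δ F

/-- `Δ` is a simplex: it has a unique maximal face containing all faces. -/
def IsSimplexC {n : ℕ} (Δ : Set (Finset (Fin n))) : Prop :=
  ∃ F ∈ Δ, ∀ G ∈ Δ, G ⊆ F

/-- Vertex decomposability, defined recursively. -/
inductive IsVertexDecomposable {n : ℕ} : Set (Finset (Fin n)) → Prop
  | simplex {Δ : Set (Finset (Fin n))} (h : IsComplex Δ) (hs : IsSimplexC Δ) :
      IsVertexDecomposable Δ
  | step {Δ : Set (Finset (Fin n))} (h : IsComplex Δ) (v : Fin n)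
      (hv : IsSheddingVertex Δ v)
      (h1 : IsVertexDecomposable (linkC Δ v)) (h2 : IsVertexDecomposable (delC Δ v)) :
      IsVertexDecomposable Δ

/-- The Stanley-Reisner ideal of `Δ`, generated by the squarefree monomials
`x_F = ∏_{i ∈ F} x_i` with `F ∉ Δ`. -/
noncomputable def SRIdeal (n : ℕ) (K : Type) [Field K] (Δ : Set (Finset (Fin n))) :
    Ideal (MvPolynomial (Fin n) K) :=
  Ideal.span {m | ∃ F : Finset (Fin n), F ∉ Δ ∧ m = ∏ i ∈ F, X i}

/-- `P_{F̄}`, the prime ideal generated by the variables `x_i` with `i ∉ F`. -/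
noncomputable def facePrime (n : ℕ) (K : Type) [Field K] (F : Finset (Fin n)) :
    Ideal (MvPolynomial (Fin n) K) :=
  Ideal.span ((fun i => (X i : MvPolynomial (Fin n) K)) '' {i | i ∉ F})

/-- The depth of a module `M` with respect to an ideal `J`: the supremum of lengths of
`M`-regular sequences consisting of elements of `J`. -/
noncomputable def depth {A : Type} [CommRing A] (J : Ideal A)
    (M : Type) [AddCommGroup M] [Module A M] : ℕ∞ :=
  sSup {k : ℕ∞ | ∃ rs : List A, (rs.length : ℕ∞) = k ∧ (∀ r ∈ rs, r ∈ J) ∧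
    RingTheory.Sequence.IsRegular M rs}

/-- The irrelevant maximal ideal `𝔪 = (x_1, …, x_n)` of `K[x_1, …, x_n]`. -/
noncomputable def mIdeal (n : ℕ) (K : Type) [Field K] : Ideal (MvPolynomial (Fin n) K) :=
  Ideal.span (Set.range X)

/-- The Krull dimension of a module, `dim M = dim (A / ann M)`. -/
noncomputable def mdim (A : Type) [CommRing A] (M : Type) [AddCommGroup M] [Module A M] :
    WithBot ℕ∞ :=
  ringKrullDim (A ⧸ Module.annihilator A M)

/-- A module over `K[x_1, …, x_n]` is Cohen-Macaulay if its depth with respect to the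
irrelevant maximal ideal equals its Krull dimension. -/
def IsCMMod (n : ℕ) (K : Type) [Field K] (M : Type) [AddCommGroup M]
    [Module (MvPolynomial (Fin n) K) M] : Prop :=
  (depth (mIdeal n K) M : WithBot ℕ∞) = mdim (MvPolynomial (Fin n) K) M

/-- A module over `K[x_1, …, x_n]` is sequentially Cohen-Macaulay if it admits a finite
filtration `0 = M_0 ⊂ M_1 ⊂ ⋯ ⊂ M_r = M` with Cohen-Macaulay quotients of strictly
increasing dimensions. -/
def IsSeqCMMod (n : ℕ) (K : Type) [Field K] (M : Type) [AddCommGroup M]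
    [Module (MvPolynomial (Fin n) K) M] : Prop :=
  ∃ (r : ℕ) (f : Fin (r + 1) → Submodule (MvPolynomial (Fin n) K) M),
    f 0 = ⊥ ∧ f (Fin.last r) = ⊤ ∧ StrictMono f ∧
    (∀ i : Fin r,
      IsCMMod n K (↥(f i.succ) ⧸ Submodule.comap (f i.succ).subtype (f i.castSucc))) ∧
    ∀ i j : Fin r, i < j →
      mdim (MvPolynomial (Fin n) K)
          (↥(f i.succ) ⧸ Submodule.comap (f i.succ).subtype (f i.castSucc)) <
        mdim (MvPolynomial (Fin n) K)
          (↥(f j.succ) ⧸ Submodule.comap (f j.succ).subtype (f j.castSucc))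

/-- Height of an ideal (meaningful for prime ideals). -/
noncomputable def htP {A : Type} [CommRing A] (𝔭 : Ideal A) : ℕ∞ :=
  ⨆ (h : 𝔭.IsPrime), Order.height (⟨𝔭, h⟩ : PrimeSpectrum A)

/-- The big height of `I`: the maximum of the heights of the associated primes of `I`. -/
noncomputable def bigh {A : Type} [CommRing A] (I : Ideal A) : ℕ∞ :=
  ⨆ 𝔭 ∈ associatedPrimes A (A ⧸ I), htP 𝔭

/-!
For a simplicial complex `Γ` let `Γ_i` be the subcomplex generated by the facets with at least `i`
vertices. The ideals `I_{Γ_i}` cut out the dimension filtration of `K[Γ]`, and comparing it with an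
arbitrary filtration shows that `K[Γ]` is sequentially Cohen-Macaulay if and only if
`depth K[Γ_i] ≥ i` for all `i`.

If `v` is a shedding vertex of `Δ`, then `link(Δ_{i+1}) = (link Δ)_i` and `del(Δ_i) = (del Δ)_i`.
So it remains to pass depth bounds from the link and the deletion to a complex `Γ`. Multiplication
by `x_v` gives an exact sequence `0 → K[star v] → K[Γ] → K[del v] → 0`, where `x_v` is regular on
`K[star v]` with quotient `K[link v]`, whence
`depth K[Γ] ≥ min (depth K[link v] + 1, depth K[del v])`.
-/

universe u

section HomologicalDepth

open CategoryTheory CategoryTheory.Abelian Pointwise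

/-- The bound `k ≤ depth(J, M)`, encoded as the vanishing of `Ext^i(A/J, M)` for `i < k`. Unlike
the supremum of lengths of regular sequences, this makes sense (and is infinite) when `JM = M`,
and it is controlled by long exact sequences. -/
def DepthGE {A : Type u} [CommRing A] (J : Ideal A) (k : ℕ) (M : Type u) [AddCommGroup M]
    [Module A M] : Prop :=
  ∀ i < k, Subsingleton (Ext (ModuleCat.of A (A ⧸ J)) (ModuleCat.of A M) i)

variable {A : Type u} [CommRing A] {J : Ideal A} {k : ℕ}
  {M M₁ M₂ M₃ : Type u} [AddCommGroup M] [Module A M] [AddCommGroup M₁] [Module A M₁]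
  [AddCommGroup M₂] [Module A M₂] [AddCommGroup M₃] [Module A M₃]

lemma shortExact_of_exact {f : M₁ →ₗ[A] M₂} {g : M₂ →ₗ[A] M₃} (hf : Function.Injective f)
    (hfg : Function.Exact f g) (hg : Function.Surjective g) :
    (ModuleCat.shortComplexOfCompEqZero f g hfg.linearMap_comp_eq_zero).ShortExact where
  exact := ModuleCat.shortComplex_exact _ hfg
  mono_f := (ModuleCat.mono_iff_injective _).mpr hf
  epi_g := (ModuleCat.epi_iff_surjective _).mpr hg

lemma smul_ext_quotient_eq_zero {i : ℕ} {a : A} (ha : a ∈ J)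
    (x : Ext (ModuleCat.of A (A ⧸ J)) (ModuleCat.of A M) i) : a • x = 0 := by
  have h : a • 𝟙 (ModuleCat.of A (A ⧸ J)) = 0 := by
    ext
    simp [Algebra.smul_def, Ideal.Quotient.eq_zero_iff_mem.mpr ha]
  rw [← Ext.mk₀_id_comp x, ← Ext.smul_comp, ← Ext.mk₀_smul, h, Ext.mk₀_zero, Ext.zero_comp]

lemma smul_ext_eq_zero_of_smul_eq_zero {N : ModuleCat A} {i : ℕ} {a : A}
    (ha : ∀ m : M, a • m = 0) (x : Ext N (ModuleCat.of A M) i) : a • x = 0 := by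
  have h : a • 𝟙 (ModuleCat.of A M) = 0 := by
    ext m
    exact ha m
  rw [Ext.smul_eq_comp_mk₀, h, Ext.mk₀_zero, Ext.comp_zero]

lemma ext_eq_zero_of_comp_eq_zero {N : ModuleCat A} {f : M₁ →ₗ[A] M₂} {g : M₂ →ₗ[A] M₃}
    (hf : Function.Injective f) (hfg : Function.Exact f g) (hg : Function.Surjective g) {i : ℕ}
    (h₃ : ∀ j, j + 1 = i → Subsingleton (Ext N (ModuleCat.of A M₃) j))
    (x : Ext N (ModuleCat.of A M₁) i)
    (hx : x.comp (Ext.mk₀ (ModuleCat.ofHom f)) (add_zero i) = 0) : x = 0 := by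
  have hS := shortExact_of_exact hf hfg hg
  cases i with
  | zero =>
    have := hS.mono_f
    exact Ext.postcomp_mk₀_injective_of_mono N
      (ModuleCat.shortComplexOfCompEqZero f g hfg.linearMap_comp_eq_zero).f
      (hx.trans (Ext.zero_comp (h := add_zero 0) ..).symm)
  | succ j =>
    have := h₃ j rfl
    obtain ⟨y, rfl⟩ := Ext.covariant_sequence_exact₁ N hS x hx rfl
    rw [Subsingleton.elim y 0, Ext.zero_comp]

namespace DepthGE

lemma zero : DepthGE J 0 M :=
  fun i hi => absurd hi i.not_lt_zero

lemma mono {l : ℕ} (h : DepthGE J k M) (hlk : l ≤ k) : DepthGE J l M :=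
  fun i hi => h i (hi.trans_le hlk)

lemma of_exact_middle {f : M₁ →ₗ[A] M₂} {g : M₂ →ₗ[A] M₃} (hf : Function.Injective f)
    (hfg : Function.Exact f g) (hg : Function.Surjective g)
    (h₁ : DepthGE J k M₁) (h₃ : DepthGE J k M₃) : DepthGE J k M₂ := by
  intro i hi
  have := h₁ i hi
  have := h₃ i hi
  refine subsingleton_of_forall_eq 0 fun x => ?_
  obtain ⟨y, rfl⟩ := Ext.covariant_sequence_exact₂ _ (shortExact_of_exact hf hfg hg) x
    (Subsingleton.elim (α := Ext _ (ModuleCat.of A M₃) i) _ _)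
  rw [Subsingleton.elim (α := Ext _ (ModuleCat.of A M₁) i) y 0, Ext.zero_comp]

lemma of_exact_left {f : M₁ →ₗ[A] M₂} {g : M₂ →ₗ[A] M₃} (hf : Function.Injective f)
    (hfg : Function.Exact f g) (hg : Function.Surjective g)
    (h₂ : DepthGE J k M₂) (h₃ : DepthGE J (k - 1) M₃) : DepthGE J k M₁ := by
  intro i hi
  have := h₂ i hi
  exact subsingleton_of_forall_eq 0 fun x =>
    ext_eq_zero_of_comp_eq_zero hf hfg hg (fun j hj => h₃ j (by omega)) x (Subsingleton.elim _ _)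

lemma of_exact_right {f : M₁ →ₗ[A] M₂} {g : M₂ →ₗ[A] M₃} (hf : Function.Injective f)
    (hfg : Function.Exact f g) (hg : Function.Surjective g)
    (h₁ : DepthGE J (k + 1) M₁) (h₂ : DepthGE J k M₂) : DepthGE J k M₃ := by
  intro i hi
  have := h₁ (i + 1) (by omega)
  have := h₂ i hi
  refine subsingleton_of_forall_eq 0 fun x => ?_
  obtain ⟨y, rfl⟩ := Ext.covariant_sequence_exact₃ _ (shortExact_of_exact hf hfg hg) x rfl
    (Subsingleton.elim (α := Ext _ (ModuleCat.of A M₁) (i + 1)) _ _)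
  rw [Subsingleton.elim (α := Ext _ (ModuleCat.of A M₂) i) y 0, Ext.zero_comp]

lemma of_subsingleton [Subsingleton M] : DepthGE J k M := by
  intro i _
  refine subsingleton_of_forall_eq 0 fun x => ?_
  rw [← one_smul A x]
  exact smul_ext_eq_zero_of_smul_eq_zero (fun _ => Subsingleton.elim _ _) x

lemma of_linearEquiv (e : M₁ ≃ₗ[A] M₂) (h : DepthGE J k M₁) : DepthGE J k M₂ :=
  of_exact_middle (M₃ := PUnit) e.injective
    ((LinearMap.exact_zero_iff_surjective _ _).mpr e.surjective)
    (fun _ => ⟨0, Subsingleton.elim _ _⟩) h of_subsingleton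

lemma of_smul_eq_zero [hJ : J.IsMaximal] {a : A} (haJ : a ∉ J) (ha : ∀ m : M, a • m = 0) :
    DepthGE J k M := by
  intro i _
  obtain ⟨b, c, hc, hbc⟩ := hJ.exists_inv haJ
  refine subsingleton_of_forall_eq 0 fun x => ?_
  calc x = b • a • x + c • x := by rw [smul_smul, ← add_smul, hbc, one_smul]
    _ = 0 := by
      rw [smul_ext_eq_zero_of_smul_eq_zero ha, smul_ext_quotient_eq_zero hc, smul_zero, add_zero]

lemma of_exact_lsmul {a : A} {g : M →ₗ[A] M₃} (ha : a ∈ J) (hreg : IsSMulRegular M a)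
    (hfg : Function.Exact (LinearMap.lsmul A M a) g) (hg : Function.Surjective g)
    (h : DepthGE J k M₃) : DepthGE J (k + 1) M := by
  intro i hi
  refine subsingleton_of_forall_eq 0 fun x => ?_
  refine ext_eq_zero_of_comp_eq_zero (f := LinearMap.lsmul A M a) hreg hfg hg
    (fun j hj => h j (by omega)) x ?_
  have : ModuleCat.ofHom (LinearMap.lsmul A M a) = a • 𝟙 (ModuleCat.of A M) := rfl
  rw [this, ← Ext.smul_eq_comp_mk₀, smul_ext_quotient_eq_zero ha]

lemma quotSMulTop {a : A} (hreg : IsSMulRegular M a) (h : DepthGE J (k + 1) M) :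
    DepthGE J k (QuotSMulTop a M) :=
  of_exact_right (f := LinearMap.lsmul A M a) hreg (LinearMap.exact_lsmul_mkQ_smul_top M a)
    (Submodule.mkQ_surjective _) h (h.mono k.le_succ)

lemma of_isWeaklyRegular {rs : List A} (hJ : ∀ r ∈ rs, r ∈ J)
    (hrs : RingTheory.Sequence.IsWeaklyRegular M rs) : DepthGE J rs.length M := by
  induction rs generalizing M with
  | nil => exact zero
  | cons a rs ih =>
    obtain ⟨ha, hJ⟩ := List.forall_mem_cons.mp hJ
    obtain ⟨hreg, hrs⟩ := (RingTheory.Sequence.isWeaklyRegular_cons_iff M a rs).mp hrs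
    exact of_exact_lsmul ha hreg (LinearMap.exact_lsmul_mkQ_smul_top M a)
      (Submodule.mkQ_surjective _) (ih hJ hrs)

lemma of_le_depth {A M : Type} [CommRing A] {J : Ideal A} [AddCommGroup M] [Module A M]
    (h : (k : ℕ∞) ≤ depth J M) : DepthGE J k M := by
  intro i hi
  obtain ⟨-, ⟨rs, rfl, hJ, hrs⟩, hlt⟩ :=
    lt_sSup_iff.mp (lt_of_lt_of_le (Nat.cast_lt.mpr hi) h)
  exact of_isWeaklyRegular hJ hrs.toIsWeaklyRegular i (Nat.cast_lt.mp hlt)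

variable [IsNoetherianRing A] [Module.Finite A M]

lemma exists_isSMulRegular (h : DepthGE J (k + 1) M) : ∃ r ∈ J, IsSMulRegular M r := by
  have := h 0 k.succ_pos
  have : Subsingleton (ModuleCat.of A (A ⧸ J) ⟶ ModuleCat.of A M) :=
    Ext.addEquiv₀.symm.subsingleton
  have : Subsingleton ((A ⧸ J) →ₗ[A] M) :=
    (ModuleCat.homAddEquiv (M := ModuleCat.of A (A ⧸ J)) (N := ModuleCat.of A M)).symm.subsingleton
  simpa only [Ideal.annihilator_quotient] using IsSMulRegular.subsingleton_linearMap_iff.mp this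

lemma exists_isRegular (h : DepthGE J k M) (hJ : J • (⊤ : Submodule A M) < ⊤) :
    ∃ rs : List A, rs.length = k ∧ (∀ r ∈ rs, r ∈ J) ∧ RingTheory.Sequence.IsRegular M rs :=
  ModuleCat.exists_isRegular_of_exists_subsingleton_ext J k (ModuleCat.of A M) hJ
    (ModuleCat.of A (A ⧸ J)) (by rw [Module.support_eq_zeroLocus, Ideal.annihilator_quotient]) h

lemma le_depth {A M : Type} [CommRing A] [IsNoetherianRing A] {J : Ideal A} [AddCommGroup M]
    [Module A M] [Module.Finite A M] (h : DepthGE J k M) (hJ : J • (⊤ : Submodule A M) < ⊤) :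
    (k : ℕ∞) ≤ depth J M := by
  obtain ⟨rs, rfl, hrs⟩ := h.exists_isRegular hJ
  exact le_sSup ⟨rs, rfl, hrs⟩

end DepthGE

end HomologicalDepth

section Dimension

open Pointwise

variable {A : Type u} [CommRing A] {J : Ideal A} {k : ℕ} {M : Type u} [AddCommGroup M] [Module A M]

lemma quotSMulTop_map_subtype_injective {r : A} {N : Submodule A M}
    (hN : ∀ m, r • m ∈ N → m ∈ N) : Function.Injective (QuotSMulTop.map r N.subtype) := by
  refine (injective_iff_map_eq_zero _).mpr fun x hx => ?_
  obtain ⟨y, rfl⟩ := Submodule.Quotient.mk_surjective _ x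
  rw [QuotSMulTop.map_apply_mk, Submodule.Quotient.mk_eq_zero,
    Submodule.mem_smul_pointwise_iff_exists] at hx
  obtain ⟨m, -, hm⟩ := hx
  rw [Submodule.Quotient.mk_eq_zero, Submodule.mem_smul_pointwise_iff_exists]
  exact ⟨⟨m, hN m (hm ▸ y.2)⟩, trivial, Subtype.ext hm⟩

variable [Module.Finite A M]

lemma annihilator_quotSMulTop_le [hJ : J.IsPrime] {r : A} (hr : r ∈ J)
    (hM : Module.annihilator A M ≤ J) : Module.annihilator A (QuotSMulTop r M) ≤ J := by
  have h : (⟨J, hJ⟩ : PrimeSpectrum A) ∈ Module.support A (QuotSMulTop r M) := by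
    rw [Module.support_quotSMulTop]
    exact ⟨Module.mem_support_iff_of_finite.mpr hM, Set.singleton_subset_iff.mpr hr⟩
  exact Module.mem_support_iff_of_finite.mp h

lemma smul_top_lt_top [hJ : J.IsPrime] (hM : Module.annihilator A M ≤ J) :
    J • (⊤ : Submodule A M) < ⊤ := by
  refine lt_top_iff_ne_top.mpr fun h => ?_
  have hmem : (⟨J, hJ⟩ : PrimeSpectrum A) ∈ Module.support A (M ⧸ J • (⊤ : Submodule A M)) := by
    rw [Module.support_quotient]
    exact ⟨Module.mem_support_iff_of_finite.mpr hM,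
      (PrimeSpectrum.mem_zeroLocus _ _).mpr subset_rfl⟩
  rw [h, Module.support_eq_empty] at hmem
  exact hmem

lemma supportDim_nonneg_of_annihilator_le [hJ : J.IsPrime] (hM : Module.annihilator A M ≤ J) :
    0 ≤ Module.supportDim A M :=
  Order.krullDim_nonneg_iff.mpr ⟨⟨⟨J, hJ⟩, Module.mem_support_iff_of_finite.mpr hM⟩⟩

lemma supportDim_le_of_annihilator_le {N : Type u} [AddCommGroup N] [Module A N]
    [Module.Finite A N] (h : Module.annihilator A M ≤ Module.annihilator A N) :
    Module.supportDim A N ≤ Module.supportDim A M := by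
  rw [Module.supportDim_eq_ringKrullDim_quotient_annihilator,
    Module.supportDim_eq_ringKrullDim_quotient_annihilator]
  exact ringKrullDim_le_of_surjective _ (Ideal.Quotient.factor_surjective h)

lemma supportDim_quotSMulTop_succ_le {r : A} (hr : IsSMulRegular M r) :
    Module.supportDim A (QuotSMulTop r M) + 1 ≤ Module.supportDim A M :=
  Module.supportDim_quotSMulTop_succ_le_of_notMem_minimalPrimes
    fun _ hp => hr.notMem_of_mem_minimalPrimes hp

-- Replacing `T` by the submodule of all elements killed by its annihilator makes it saturated
-- with respect to an `M`-regular `r ∈ J`, so that `T/rT` embeds in `M/rM` and induction applies.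
lemma DepthGE.le_supportDim_submodule [IsNoetherianRing A] [hJ : J.IsMaximal]
    (h : DepthGE J k M) (T : Submodule A M) (hT : Module.annihilator A T ≤ J) :
    k ≤ Module.supportDim A T := by
  induction k generalizing M with
  | zero => exact_mod_cast supportDim_nonneg_of_annihilator_le hT
  | succ k ih =>
    obtain ⟨r, hrJ, hr⟩ := h.exists_isSMulRegular
    let T' := Submodule.torsionBySet A M (Module.annihilator A T)
    have hTT' : T ≤ T' := fun t ht =>
      (Submodule.mem_torsionBySet_iff _ _).mpr fun a =>
        congrArg Subtype.val (Module.mem_annihilator.mp a.2 ⟨t, ht⟩)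
    have hT'T : Module.annihilator A T ≤ Module.annihilator A T' := fun a ha =>
      Module.mem_annihilator.mpr fun t =>
        Subtype.ext ((Submodule.mem_torsionBySet_iff _ _).mp t.2 ⟨a, ha⟩)
    have hsat : ∀ m, r • m ∈ T' → m ∈ T' := fun m hm =>
      (Submodule.mem_torsionBySet_iff _ _).mpr fun a => hr <| by
        simpa only [smul_comm r, smul_zero] using (Submodule.mem_torsionBySet_iff _ _).mp hm a
    have hT' : Module.annihilator A T' ≤ J :=
      ((Submodule.inclusion hTT').annihilator_le_of_injective
        (Submodule.inclusion_injective hTT')).trans hT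
    let φ := QuotSMulTop.map r T'.subtype
    have hφ : Function.Injective φ := quotSMulTop_map_subtype_injective hsat
    let e := LinearEquiv.ofInjective φ hφ
    have hrange := ih (h.quotSMulTop hr) (LinearMap.range φ)
      (e.annihilator_eq ▸ annihilator_quotSMulTop_le hrJ hT')
    calc ((k + 1 : ℕ) : WithBot ℕ∞) = k + 1 := Nat.cast_succ k
      _ ≤ Module.supportDim A (QuotSMulTop r T') + 1 := by
        rw [Module.supportDim_eq_of_equiv e]
        gcongr
      _ ≤ Module.supportDim A T' :=
        supportDim_quotSMulTop_succ_le fun _ _ hxy => Subtype.ext (hr (congrArg Subtype.val hxy))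
      _ ≤ Module.supportDim A T := supportDim_le_of_annihilator_le hT'T

lemma DepthGE.le_supportDim_of_injective [IsNoetherianRing A] [J.IsMaximal] (h : DepthGE J k M)
    {N : Type u} [AddCommGroup N] [Module A N] (φ : N →ₗ[A] M) (hφ : Function.Injective φ)
    (hN : Module.annihilator A N ≤ J) : k ≤ Module.supportDim A N := by
  have e := LinearEquiv.ofInjective φ hφ
  rw [Module.supportDim_eq_of_equiv e]
  exact h.le_supportDim_submodule _ (e.annihilator_eq ▸ hN)

end Dimension

section Subquotient

variable {A : Type u} [CommRing A] {J : Ideal A} {k : ℕ} {M : Type u} [AddCommGroup M] [Module A M]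
  {N N' : Submodule A M}

lemma mapQ_subtype_injective :
    Function.Injective (Submodule.mapQ (N.submoduleOf N') N N'.subtype le_rfl) :=
  LinearMap.ker_eq_bot.mp (Submodule.ker_liftQ_eq_bot _ _ _ (by simp [LinearMap.ker_comp,
    Submodule.submoduleOf]))

lemma exact_mapQ_subtype_factor (h : N ≤ N') :
    Function.Exact (Submodule.mapQ (N.submoduleOf N') N N'.subtype le_rfl)
      (Submodule.factor h) := by
  simp [LinearMap.exact_iff, Submodule.mapQ, Submodule.ker_liftQ, Submodule.range_liftQ,
    LinearMap.range_comp]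

lemma annihilator_mul_annihilator_subquotient_le :
    Module.annihilator A N * Module.annihilator A (N' ⧸ N.submoduleOf N') ≤
      Module.annihilator A N' := by
  refine Ideal.mul_le.mpr fun a ha b hb => Module.mem_annihilator.mpr fun x => ?_
  have hbx : b • x ∈ N.submoduleOf N' :=
    (Submodule.Quotient.mk_eq_zero _).mp (Module.mem_annihilator.mp hb (Submodule.Quotient.mk x))
  have habx : a • b • (x : M) = 0 :=
    congrArg Subtype.val (Module.mem_annihilator.mp ha ⟨_, hbx⟩)
  rw [mul_smul]
  exact Subtype.ext habx

lemma annihilator_le_annihilator_subquotient :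
    Module.annihilator A N' ≤ Module.annihilator A (N' ⧸ N.submoduleOf N') :=
  LinearMap.annihilator_le_of_surjective _ (Submodule.mkQ_surjective _)

namespace DepthGE

lemma quotient_of_subquotient (h : N ≤ N') (hsub : DepthGE J k (N' ⧸ N.submoduleOf N'))
    (hN' : DepthGE J k (M ⧸ N')) : DepthGE J k (M ⧸ N) :=
  of_exact_middle mapQ_subtype_injective (exact_mapQ_subtype_factor h)
    (Submodule.factor_surjective h) hsub hN'

lemma subquotient (h : N ≤ N') (hN : DepthGE J k (M ⧸ N)) (hN' : DepthGE J (k - 1) (M ⧸ N')) :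
    DepthGE J k (N' ⧸ N.submoduleOf N') :=
  of_exact_left mapQ_subtype_injective (exact_mapQ_subtype_factor h)
    (Submodule.factor_surjective h) hN hN'

lemma quotient_of_le (h : N ≤ N') (hsub : DepthGE J (k + 1) (N' ⧸ N.submoduleOf N'))
    (hN : DepthGE J k (M ⧸ N)) : DepthGE J k (M ⧸ N') :=
  of_exact_right mapQ_subtype_injective (exact_mapQ_subtype_factor h)
    (Submodule.factor_surjective h) hsub hN

lemma quotient_of_filtration {r : ℕ} {f : Fin (r + 1) → Submodule A M} (hf : Monotone f)
    (hlast : f (Fin.last r) = ⊤) (c : Fin (r + 1))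
    (h : ∀ j : Fin r, c ≤ j.castSucc →
      DepthGE J k (f j.succ ⧸ (f j.castSucc).submoduleOf (f j.succ))) :
    DepthGE J k (M ⧸ f c) := by
  suffices ∀ l, c ≤ l → DepthGE J k (M ⧸ f l) from this c le_rfl
  intro l
  induction l using Fin.reverseInduction with
  | last =>
    have := Submodule.Quotient.subsingleton_iff.mpr hlast
    exact fun _ => of_subsingleton
  | cast j ih =>
    exact fun hj => quotient_of_subquotient (hf j.castSucc_lt_succ.le) (h j hj)
      (ih (hj.trans j.castSucc_lt_succ.le))

end DepthGE

lemma not_annihilator_le_of_filtration {P : Ideal A} [hP : P.IsPrime] {r : ℕ}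
    {f : Fin (r + 1) → Submodule A M} (hzero : f 0 = ⊥) (c : Fin (r + 1))
    (h : ∀ j : Fin r, j.castSucc < c →
      ¬ Module.annihilator A (f j.succ ⧸ (f j.castSucc).submoduleOf (f j.succ)) ≤ P) :
    ¬ Module.annihilator A (f c) ≤ P := by
  induction c using Fin.induction with
  | zero =>
    rw [hzero, Module.annihilator_eq_top_iff.mpr inferInstance, top_le_iff]
    exact hP.ne_top
  | succ j ih =>
    intro hle
    rcases hP.mul_le.mp (annihilator_mul_annihilator_subquotient_le.trans hle) with hj | hj
    · exact ih (fun l hl => h l (hl.trans j.castSucc_lt_succ)) hj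
    · exact h j j.castSucc_lt_succ hj

end Subquotient

section Order

lemma exists_threshold {β : Type*} [LinearOrder β] {r : ℕ} {d : Fin r → β} (hd : Monotone d)
    (b : β) : ∃ c : Fin (r + 1),
      (∀ j : Fin r, j.castSucc < c → d j < b) ∧ ∀ j : Fin r, c ≤ j.castSucc → b ≤ d j := by
  obtain ⟨c, hc, hmin⟩ := (wellFounded_lt (α := Fin (r + 1))).has_min
    {c | ∀ j : Fin r, c ≤ j.castSucc → b ≤ d j}
    ⟨Fin.last r, fun j hj => absurd hj (Fin.castSucc_lt_last j).not_ge⟩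
  exact ⟨c, fun j hj => lt_of_not_ge fun hb =>
    hmin j.castSucc (fun l hl => hb.trans (hd (Fin.castSucc_le_castSucc_iff.mp hl))) hj, hc⟩

lemma strictMono_snoc {α : Type*} [Preorder α] {r : ℕ} {f : Fin r → α} (hf : StrictMono f)
    {a : α} (ha : ∀ j, f j < a) : StrictMono (Fin.snoc f a : Fin (r + 1) → α) := by
  intro i j hij
  induction j using Fin.lastCases with
  | last =>
    obtain ⟨i, rfl⟩ := Fin.eq_castSucc_of_ne_last hij.ne
    simpa only [Fin.snoc_castSucc, Fin.snoc_last] using ha i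
  | cast j =>
    obtain ⟨i, rfl⟩ := Fin.eq_castSucc_of_ne_last (hij.trans (Fin.castSucc_lt_last j)).ne
    simpa only [Fin.snoc_castSucc] using hf (Fin.castSucc_lt_castSucc_iff.mp hij)

lemma exists_strictMono_of_monotone {α : Type*} [PartialOrder α] {g : ℕ → α} (hg : Monotone g)
    (k : ℕ) : ∃ (r : ℕ) (f : Fin (r + 1) → α) (e : Fin r → ℕ), StrictMono f ∧ StrictMono e ∧
      f 0 = g 0 ∧ f (Fin.last r) = g k ∧
      ∀ j, e j < k ∧ f j.castSucc = g (e j) ∧ f j.succ = g (e j + 1) := by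
  induction k with
  | zero =>
    exact ⟨0, fun _ => g 0, Fin.elim0, Fin.strictMono_iff_lt_succ.mpr fun j => j.elim0,
      Subsingleton.strictMono _, rfl, rfl, fun j => j.elim0⟩
  | succ k ih =>
    obtain ⟨r, f, e, hf, he, hzero, hlast, hstep⟩ := ih
    by_cases hk : g k = g (k + 1)
    · exact ⟨r, f, e, hf, he, hzero, hlast.trans hk,
        fun j => ⟨(hstep j).1.trans k.lt_succ_self, (hstep j).2⟩⟩
    have hlt : ∀ j, f j < g (k + 1) := fun j =>
      ((hf.monotone j.le_last).trans_eq hlast).trans_lt ((hg k.le_succ).lt_of_ne hk)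
    refine ⟨r + 1, Fin.snoc f (g (k + 1)), Fin.snoc e k, strictMono_snoc hf hlt,
      strictMono_snoc he fun j => (hstep j).1, ?_, Fin.snoc_last _ _, fun j => ?_⟩
    · rw [← hzero]
      exact Fin.snoc_castSucc (α := fun _ => α) _ _ 0
    · induction j using Fin.lastCases with
      | last => simp [Fin.snoc_last, Fin.succ_last, hlast]
      | cast j =>
        simpa only [Fin.snoc_castSucc, Fin.succ_castSucc] using
          ⟨(hstep j).1.trans k.lt_succ_self, (hstep j).2⟩

end Order

section Combinatorics

variable {n : ℕ} {Δ : Set (Finset (Fin n))} {v : Fin n}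

/-- The subcomplex `⟨F : F a facet of Δ with |F| ∈ S⟩`. For `S = [i, ∞)` this is the sequential
layer of Björner and Wachs, through which sequential Cohen-Macaulayness of `Δ` is tested. -/
def facetC (Δ : Set (Finset (Fin n))) (S : Set ℕ) : Set (Finset (Fin n)) :=
  {G | ∃ F, IsFacet Δ F ∧ F.card ∈ S ∧ G ⊆ F}

/-- The closed star of `v`, which is empty when `v` is not a vertex of `Δ`. It is the cone with
apex `v` over the link. -/
def starC (Δ : Set (Finset (Fin n))) (v : Fin n) : Set (Finset (Fin n)) :=
  {G | insert v G ∈ Δ}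

lemma IsComplex.isLowerSet (hΔ : IsComplex Δ) : IsLowerSet Δ :=
  fun F G hGF hF => hΔ.2 F hF G hGF

lemma isLowerSet_facetC (S : Set ℕ) : IsLowerSet (facetC Δ S) :=
  fun _ _ hGH ⟨F, hF, hFS, hHF⟩ => ⟨F, hF, hFS, hGH.trans hHF⟩

lemma isLowerSet_starC (hΔ : IsLowerSet Δ) : IsLowerSet (starC Δ v) :=
  fun _ _ hGH hH => hΔ (Finset.insert_subset_insert v hGH) hH

lemma isLowerSet_delC (hΔ : IsLowerSet Δ) : IsLowerSet (delC Δ v) :=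
  fun _ _ hGH ⟨hH, hvH⟩ => ⟨hΔ hGH hH, fun hvG => hvH (hGH hvG)⟩

lemma linkC_eq_delC_starC (hΔ : IsLowerSet Δ) : linkC Δ v = delC (starC Δ v) v :=
  Set.ext fun G => ⟨fun ⟨_, hvG, hG⟩ => ⟨hG, hvG⟩,
    fun ⟨hG, hvG⟩ => ⟨hΔ (Finset.subset_insert v G) hG, hvG, hG⟩⟩

lemma starC_starC : starC (starC Δ v) v = starC Δ v := by
  ext G
  simp only [starC, Set.mem_ofPred_eq, Finset.insert_idem]

lemma isLowerSet_linkC (hΔ : IsLowerSet Δ) : IsLowerSet (linkC Δ v) :=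
  linkC_eq_delC_starC hΔ ▸ isLowerSet_delC (isLowerSet_starC hΔ)

lemma exists_isFacet_superset {G : Finset (Fin n)} (hG : G ∈ Δ) : ∃ F, IsFacet Δ F ∧ G ⊆ F := by
  obtain ⟨F, hGF, hF⟩ := (Set.toFinite Δ).exists_le_maximal hG
  exact ⟨F, ⟨hF.1, fun H hH hFH => (hF.eq_of_le hH hFH).symm⟩, hGF⟩

lemma facetC_subset (hΔ : IsLowerSet Δ) (S : Set ℕ) : facetC Δ S ⊆ Δ :=
  fun _ ⟨_, hF, _, hGF⟩ => hΔ hGF hF.1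

lemma facetC_mono {S T : Set ℕ} (hST : S ⊆ T) : facetC Δ S ⊆ facetC Δ T :=
  fun _ ⟨F, hF, hFS, hGF⟩ => ⟨F, hF, hST hFS, hGF⟩

lemma facetC_univ (hΔ : IsLowerSet Δ) : facetC Δ Set.univ = Δ :=
  (facetC_subset hΔ _).antisymm fun _ hG =>
    let ⟨F, hF, hGF⟩ := exists_isFacet_superset hG
    ⟨F, hF, trivial, hGF⟩

lemma facetC_Ici_succ_eq_empty : facetC Δ (Set.Ici (n + 1)) = ∅ :=
  Set.eq_empty_of_forall_notMem fun _ ⟨F, _, hF, _⟩ =>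
    (card_finset_fin_le F).not_gt (Set.mem_Ici.mp hF)

lemma subset_facetC_union_facetC_compl (S : Set ℕ) : Δ ⊆ facetC Δ S ∪ facetC Δ Sᶜ := by
  intro G hG
  obtain ⟨F, hF, hGF⟩ := exists_isFacet_superset hG
  exact (em (F.card ∈ S)).imp (fun hS => ⟨F, hF, hS, hGF⟩) fun hS => ⟨F, hF, hS, hGF⟩

lemma isFacet_linkC_iff (hΔ : IsLowerSet Δ) {F : Finset (Fin n)} (hvF : v ∉ F) :
    IsFacet (linkC Δ v) F ↔ IsFacet Δ (insert v F) := by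
  constructor
  · rintro ⟨⟨-, -, hF⟩, hmax⟩
    refine ⟨hF, fun H hH hFH => ?_⟩
    have hvH : v ∈ H := hFH (Finset.mem_insert_self v F)
    have hH' : H.erase v ∈ linkC Δ v :=
      ⟨hΔ (H.erase_subset v) hH, H.notMem_erase v, by rwa [Finset.insert_erase hvH]⟩
    rw [← hmax _ hH' (Finset.subset_erase.mpr ⟨(Finset.subset_insert v F).trans hFH, hvF⟩),
      Finset.insert_erase hvH]
  · rintro ⟨hF, hmax⟩
    refine ⟨⟨hΔ (Finset.subset_insert v F) hF, hvF, hF⟩, fun H ⟨_, hvH, hH⟩ hFH => ?_⟩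
    rw [← Finset.erase_insert hvH, hmax _ hH (Finset.insert_subset_insert v hFH),
      Finset.erase_insert hvF]

lemma linkC_facetC_Ici_succ (hΔ : IsLowerSet Δ) (i : ℕ) :
    linkC (facetC Δ (Set.Ici (i + 1))) v = facetC (linkC Δ v) (Set.Ici i) := by
  ext G
  constructor
  · rintro ⟨-, hvG, F, hF, hi, hGF⟩
    have hvF : v ∈ F := hGF (Finset.mem_insert_self v G)
    refine ⟨F.erase v, (isFacet_linkC_iff hΔ (F.notMem_erase v)).mpr ?_, ?_,
      Finset.subset_erase.mpr ⟨(Finset.subset_insert v G).trans hGF, hvG⟩⟩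
    · rwa [Finset.insert_erase hvF]
    · rw [Finset.card_erase_of_mem hvF]
      exact Nat.le_sub_one_of_lt hi
  · rintro ⟨F, hF, hi, hGF⟩
    have hvF : v ∉ F := hF.1.2.1
    have hinsert : insert v G ∈ facetC Δ (Set.Ici (i + 1)) := by
      refine ⟨insert v F, (isFacet_linkC_iff hΔ hvF).mp hF, ?_, Finset.insert_subset_insert v hGF⟩
      rw [Finset.card_insert_of_notMem hvF]
      exact Nat.succ_le_succ hi
    exact ⟨isLowerSet_facetC _ (Finset.subset_insert v G) hinsert, fun hvG => hvF (hGF hvG),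
      hinsert⟩

-- A facet of `Δ` through `v` is not a facet of the deletion once `v` is removed, so it lies in a
-- facet of the deletion that is at least as large as the original one.
lemma IsSheddingVertex.delC_facetC_Ici (hv : IsSheddingVertex Δ v) (hΔ : IsLowerSet Δ) (i : ℕ) :
    delC (facetC Δ (Set.Ici i)) v = facetC (delC Δ v) (Set.Ici i) := by
  ext G
  constructor
  · rintro ⟨⟨F, hF, hi, hGF⟩, hvG⟩
    by_cases hvF : v ∈ F
    · obtain ⟨H, hH, hFH⟩ : ∃ H, IsFacet (delC Δ v) H ∧ F.erase v ⊆ H :=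
        exists_isFacet_superset ⟨hΔ (F.erase_subset v) hF.1, F.notMem_erase v⟩
      have hne : F.erase v ≠ H := by
        rintro rfl
        have hFv : F = F.erase v := (hv.2 _ hH).2 F hF.1 (F.erase_subset v)
        exact F.notMem_erase v (hFv ▸ hvF)
      have hlt : (F.erase v).card < H.card := Finset.card_lt_card (hFH.ssubset_of_ne hne)
      refine ⟨H, hH, (Set.mem_Ici.mp hi).trans ?_,
        (Finset.subset_erase.mpr ⟨hGF, hvG⟩).trans hFH⟩
      rw [Finset.card_erase_of_mem hvF] at hlt
      omega
    · exact ⟨F, ⟨⟨hF.1, hvF⟩, fun H hH => hF.2 H hH.1⟩, hi, hGF⟩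
  · rintro ⟨F, hF, hi, hGF⟩
    exact ⟨⟨F, hv.2 F hF, hi, hGF⟩, fun hvG => hF.1.2 (hGF hvG)⟩

end Combinatorics

section Colon

variable {A : Type u} [CommRing A] {I J : Ideal A} {k : ℕ} {x : A}

lemma colon_singleton_le_comap_lsmul :
    I.colon {x} ≤ Submodule.comap (LinearMap.lsmul A A x) I :=
  fun a ha => by
    rw [Submodule.mem_comap, LinearMap.lsmul_apply, smul_eq_mul, mul_comm]
    exact Submodule.mem_colon_singleton.mp ha

lemma mapQ_lsmul_colon_injective :
    Function.Injective (Submodule.mapQ (I.colon {x}) I (LinearMap.lsmul A A x)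
      colon_singleton_le_comap_lsmul) := by
  refine LinearMap.ker_eq_bot.mp (Submodule.ker_liftQ_eq_bot _ _ _ fun a ha => ?_)
  rw [LinearMap.ker_comp, Submodule.ker_mkQ, Submodule.mem_comap, LinearMap.lsmul_apply,
    smul_eq_mul, mul_comm] at ha
  exact Submodule.mem_colon_singleton.mpr ha

lemma exact_mapQ_lsmul_factor {I' : Ideal A}
    (h : I' ≤ Submodule.comap (LinearMap.lsmul A A x) I) :
    Function.Exact (Submodule.mapQ I' I (LinearMap.lsmul A A x) h)
      (Submodule.factor (le_sup_left : I ≤ I ⊔ Ideal.span {x})) := by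
  have hrange : LinearMap.range (LinearMap.lsmul A A x) = Ideal.span {x} := by
    ext a
    simp [Ideal.mem_span_singleton', mul_comm]
  rw [LinearMap.exact_iff, Submodule.factor, Submodule.mapQ, Submodule.ker_liftQ, Submodule.mapQ,
    Submodule.range_liftQ, LinearMap.range_comp, hrange]
  simp [Submodule.map_sup]

namespace DepthGE

lemma quotient_of_colon (hcolon : DepthGE J k (A ⧸ I.colon {x}))
    (hsup : DepthGE J k (A ⧸ I ⊔ Ideal.span {x})) : DepthGE J k (A ⧸ I) :=
  of_exact_middle mapQ_lsmul_colon_injective (exact_mapQ_lsmul_factor _)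
    (Submodule.factor_surjective _) hcolon hsup

lemma quotient_of_colon_eq (hx : x ∈ J) (hI : I.colon {x} = I)
    (hsup : DepthGE J k (A ⧸ I ⊔ Ideal.span {x})) : DepthGE J (k + 1) (A ⧸ I) := by
  have hreg : IsSMulRegular (A ⧸ I) x :=
    (isSMulRegular_quotient_iff_mem_of_smul_mem I x).mpr fun a ha => by
      rw [← hI, Submodule.mem_colon_singleton, smul_eq_mul, mul_comm]
      exact ha
  have hexact := exact_mapQ_lsmul_factor (I' := I) (I := I) (x := x) fun a ha => I.mul_mem_left x ha
  exact of_exact_lsmul hx hreg hexact (Submodule.factor_surjective _) hsup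

end DepthGE

end Colon

section StanleyReisner

variable {n : ℕ} {K : Type} [Field K] {Δ Γ : Set (Finset (Fin n))} {F : Finset (Fin n)} {v : Fin n}

lemma mem_facePrime_iff_support {f : MvPolynomial (Fin n) K} :
    f ∈ facePrime n K F ↔ ∀ m ∈ f.support, ¬ m.support ⊆ F := by
  rw [facePrime, mem_ideal_span_X_image]
  refine forall₂_congr fun m _ => ?_
  simp [Finset.not_subset, and_comm]

lemma prod_X_eq_monomial (F : Finset (Fin n)) :
    ∏ i ∈ F, (X i : MvPolynomial (Fin n) K) = monomial (Finsupp.indicator F fun _ _ => 1) 1 := by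
  simpa only [pow_one] using prod_X_pow (R := K) (fun _ => 1) F

lemma indicator_one_le_iff_subset_support {m : Fin n →₀ ℕ} :
    Finsupp.indicator F (fun _ _ => 1) ≤ m ↔ F ⊆ m.support := by
  simp only [Finsupp.le_def, Finsupp.indicator_apply, Finset.subset_iff, Finsupp.mem_support_iff,
    ← Nat.one_le_iff_ne_zero]
  refine forall_congr' fun i => ?_
  split_ifs with hi <;> simp [hi]

lemma mem_SRIdeal_iff_support (hΓ : IsLowerSet Γ) {f : MvPolynomial (Fin n) K} :
    f ∈ SRIdeal n K Γ ↔ ∀ m ∈ f.support, m.support ∉ Γ := by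
  have hspan : SRIdeal n K Γ = Ideal.span ((fun m => monomial m (1 : K)) ''
      ((fun F => Finsupp.indicator F fun _ _ => 1) '' Γᶜ)) := by
    simp only [SRIdeal, prod_X_eq_monomial, Set.image_image]
    congr 1
    ext p
    simp [eq_comm]
  rw [hspan, mem_ideal_span_monomial_image]
  refine forall₂_congr fun m _ => ?_
  simp only [Set.exists_mem_image, indicator_one_le_iff_subset_support]
  exact ⟨fun ⟨F, hF, hFm⟩ hm => hF (hΓ hFm hm), fun hm => ⟨_, hm, subset_rfl⟩⟩

lemma SRIdeal_anti (h : Δ ⊆ Γ) : SRIdeal n K Γ ≤ SRIdeal n K Δ :=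
  Ideal.span_mono fun _ ⟨F, hF, hm⟩ => ⟨F, fun hFΔ => hF (h hFΔ), hm⟩

lemma SRIdeal_empty : SRIdeal n K ∅ = ⊤ :=
  (Ideal.eq_top_iff_one _).mpr (Ideal.subset_span ⟨∅, Set.notMem_empty _, Finset.prod_empty.symm⟩)

lemma mem_SRIdeal_iff_facePrime (hΓ : IsLowerSet Γ) {f : MvPolynomial (Fin n) K} :
    f ∈ SRIdeal n K Γ ↔ ∀ F ∈ Γ, f ∈ facePrime n K F := by
  simp only [mem_SRIdeal_iff_support hΓ, mem_facePrime_iff_support]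
  exact ⟨fun h F hF m hm hmF => h m hm (hΓ hmF hF), fun h m hm hmΓ => h _ hmΓ m hm subset_rfl⟩

lemma ker_killCompl_eq_facePrime (F : Finset (Fin n)) :
    RingHom.ker (killCompl (R := K) (Subtype.val_injective (p := (· ∈ F)))) =
      facePrime n K F := by
  refine le_antisymm (fun f hf => ?_) (Ideal.span_le.mpr ?_)
  · have hcomp : ((Ideal.Quotient.mkₐ K (facePrime n K F)).comp (rename Subtype.val)).comp
        (killCompl (Subtype.val_injective (p := (· ∈ F)))) =
          Ideal.Quotient.mkₐ K (facePrime n K F) := by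
      ext i
      by_cases hi : i ∈ F
      · have hkill := killCompl_rename_app (R := K) (Subtype.val_injective (p := (· ∈ F)))
          (X ⟨i, hi⟩)
        rw [rename_X] at hkill
        rw [AlgHom.comp_apply, hkill, AlgHom.comp_apply, rename_X]
      · have hX : (X i : MvPolynomial (Fin n) K) ∈ facePrime n K F := Ideal.subset_span ⟨i, hi, rfl⟩
        simp [killCompl, hi, Ideal.Quotient.eq_zero_iff_mem.mpr hX]
    have hf' := DFunLike.congr_fun hcomp f
    rw [AlgHom.comp_apply, RingHom.mem_ker.mp hf, map_zero] at hf'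
    exact Ideal.Quotient.eq_zero_iff_mem.mp hf'.symm
  · rintro _ ⟨i, hi, rfl⟩
    have hi' : i ∉ F := hi
    simp [RingHom.mem_ker, killCompl, hi']

instance facePrime_isPrime (F : Finset (Fin n)) : (facePrime n K F).IsPrime :=
  ker_killCompl_eq_facePrime (K := K) F ▸ RingHom.ker_isPrime _

lemma ringKrullDim_quotient_facePrime (F : Finset (Fin n)) :
    ringKrullDim (MvPolynomial (Fin n) K ⧸ facePrime n K F) = F.card := by
  have hsurj : Function.Surjective (killCompl (R := K) (Subtype.val_injective (p := (· ∈ F)))) :=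
    fun p => ⟨rename Subtype.val p, killCompl_rename_app _ p⟩
  rw [← ker_killCompl_eq_facePrime, ringKrullDim_eq_of_ringEquiv
    (Ideal.quotientKerAlgEquivOfSurjective hsurj).toRingEquiv,
    MvPolynomial.ringKrullDim_of_isNoetherianRing, ringKrullDim_eq_zero_of_field]
  simp

lemma exists_facePrime_le {P : Ideal (MvPolynomial (Fin n) K)} [hP : P.IsPrime]
    (h : SRIdeal n K Γ ≤ P) : ∃ F ∈ Γ, facePrime n K F ≤ P := by
  classical
  let F : Finset (Fin n) := {i | X i ∉ P}
  refine ⟨F, by_contra fun hF => ?_, Ideal.span_le.mpr ?_⟩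
  · obtain ⟨i, hi, hiP⟩ := hP.prod_mem_iff.mp (h (Ideal.subset_span ⟨F, hF, rfl⟩))
    exact (Finset.mem_filter.mp hi).2 hiP
  · rintro _ ⟨i, hi, rfl⟩
    exact by_contra fun hiP => hi (Finset.mem_filter.mpr ⟨Finset.mem_univ i, hiP⟩)

lemma ringKrullDim_quotient_le_of_forall_prime {A : Type*} [CommRing A] {I : Ideal A}
    {d : WithBot ℕ∞} (h : ∀ P : Ideal A, P.IsPrime → I ≤ P → ringKrullDim (A ⧸ P) ≤ d) :
    ringKrullDim (A ⧸ I) ≤ d := by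
  rw [ringKrullDim_quotient]
  refine iSup_le fun l => le_trans ?_ (h l.head.1.asIdeal l.head.1.isPrime l.head.2)
  rw [ringKrullDim_quotient]
  exact Order.LTSeries.length_le_krullDim
    { length := l.length
      toFun := fun i => ⟨(l i).1, l.head_le i⟩
      step := l.step }

lemma ringKrullDim_quotient_SRIdeal_le {d : ℕ} (hd : ∀ F ∈ Γ, F.card ≤ d) :
    ringKrullDim (MvPolynomial (Fin n) K ⧸ SRIdeal n K Γ) ≤ d := by
  refine ringKrullDim_quotient_le_of_forall_prime fun P hP hΓP => ?_
  obtain ⟨F, hF, hFP⟩ := exists_facePrime_le hΓP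
  calc ringKrullDim (MvPolynomial (Fin n) K ⧸ P)
      ≤ ringKrullDim (MvPolynomial (Fin n) K ⧸ facePrime n K F) :=
        ringKrullDim_le_of_surjective _ (Ideal.Quotient.factor_surjective hFP)
    _ = F.card := ringKrullDim_quotient_facePrime F
    _ ≤ d := by exact_mod_cast hd F hF

lemma ker_constantCoeff_eq_mIdeal :
    RingHom.ker (constantCoeff (σ := Fin n) (R := K)) = mIdeal n K := by
  ext f
  rw [mIdeal, ← Set.image_univ, mem_ideal_span_X_image, RingHom.mem_ker, constantCoeff_eq]
  constructor
  · intro hf m hm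
    have hm0 : m ≠ 0 := by
      rintro rfl
      exact mem_support_iff.mp hm hf
    simpa [Finsupp.ext_iff] using hm0
  · intro hf
    by_contra h0
    simpa using hf 0 (mem_support_iff.mpr h0)

instance mIdeal_isMaximal : (mIdeal n K).IsMaximal :=
  ker_constantCoeff_eq_mIdeal (n := n) (K := K) ▸
    RingHom.ker_isMaximal_of_surjective _ fun c => ⟨C c, constantCoeff_C _ c⟩

lemma facePrime_anti {G : Finset (Fin n)} (h : G ⊆ F) : facePrime n K F ≤ facePrime n K G :=
  Ideal.span_mono (Set.image_mono fun _ hi hiG => hi (h hiG))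

lemma facePrime_le_mIdeal (F : Finset (Fin n)) : facePrime n K F ≤ mIdeal n K :=
  Ideal.span_mono (Set.image_subset_range _ _)

lemma mem_SRIdeal_of_mul_mem (hΓ : IsLowerSet Γ) {s f : MvPolynomial (Fin n) K}
    (hs : s ∉ mIdeal n K) (h : s * f ∈ SRIdeal n K Γ) : f ∈ SRIdeal n K Γ := by
  rw [mem_SRIdeal_iff_facePrime hΓ] at h ⊢
  exact fun F hF => ((facePrime_isPrime F).mem_or_mem (h F hF)).resolve_left
    fun hsF => hs (facePrime_le_mIdeal F hsF)

lemma SRIdeal_facetC_mul_SRIdeal_facetC_compl_le (hΔ : IsLowerSet Δ) (S : Set ℕ) :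
    SRIdeal n K (facetC Δ S) * SRIdeal n K (facetC Δ Sᶜ) ≤ SRIdeal n K Δ := by
  refine Ideal.mul_le.mpr fun a ha b hb => (mem_SRIdeal_iff_facePrime hΔ).mpr fun F hF => ?_
  rcases subset_facetC_union_facetC_compl S hF with hFS | hFS
  · exact Ideal.mul_mem_right b _
      ((mem_SRIdeal_iff_facePrime (isLowerSet_facetC S)).mp ha F hFS)
  · exact Ideal.mul_mem_left _ a
      ((mem_SRIdeal_iff_facePrime (isLowerSet_facetC Sᶜ)).mp hb F hFS)

lemma support_single_one_add (v : Fin n) (m : Fin n →₀ ℕ) :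
    (Finsupp.single v 1 + m).support = insert v m.support := by
  ext j
  by_cases h : v = j <;> simp [h, eq_comm]

lemma SRIdeal_colon_X (hΓ : IsLowerSet Γ) (v : Fin n) :
    (SRIdeal n K Γ).colon {X v} = SRIdeal n K (starC Γ v) := by
  ext f
  rw [Submodule.mem_colon_singleton, smul_eq_mul, mul_comm, mem_SRIdeal_iff_support hΓ,
    mem_SRIdeal_iff_support (isLowerSet_starC hΓ), support_X_mul]
  simp [support_single_one_add, starC]

lemma SRIdeal_sup_span_X (Γ : Set (Finset (Fin n))) (v : Fin n) :
    SRIdeal n K Γ ⊔ Ideal.span {X v} = SRIdeal n K (delC Γ v) := by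
  refine le_antisymm (sup_le (SRIdeal_anti fun _ hG => hG.1) ?_) (Ideal.span_le.mpr ?_)
  · refine (Ideal.span_singleton_le_iff_mem _).mpr (Ideal.subset_span ⟨{v}, ?_, ?_⟩)
    · exact fun hv => hv.2 (Finset.mem_singleton_self v)
    · rw [Finset.prod_singleton]
  · rintro _ ⟨F, hF, rfl⟩
    by_cases hv : v ∈ F
    · exact Ideal.mem_sup_right (Ideal.mem_span_singleton.mpr (Finset.dvd_prod_of_mem _ hv))
    · exact Ideal.mem_sup_left (Ideal.subset_span ⟨F, fun hFΓ => hF ⟨hFΓ, hv⟩, rfl⟩)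

lemma DepthGE.of_linkC_delC (hΓ : IsLowerSet Γ) (v : Fin n) {i : ℕ}
    (hlink : DepthGE (mIdeal n K) i (MvPolynomial (Fin n) K ⧸ SRIdeal n K (linkC Γ v)))
    (hdel : DepthGE (mIdeal n K) (i + 1) (MvPolynomial (Fin n) K ⧸ SRIdeal n K (delC Γ v))) :
    DepthGE (mIdeal n K) (i + 1) (MvPolynomial (Fin n) K ⧸ SRIdeal n K Γ) := by
  have hstar : DepthGE (mIdeal n K) (i + 1)
      (MvPolynomial (Fin n) K ⧸ SRIdeal n K (starC Γ v)) := by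
    refine DepthGE.quotient_of_colon_eq (x := X v) (Ideal.subset_span ⟨v, rfl⟩) ?_ ?_
    · rw [SRIdeal_colon_X (isLowerSet_starC hΓ), starC_starC]
    · rwa [SRIdeal_sup_span_X, ← linkC_eq_delC_starC hΓ]
  refine DepthGE.quotient_of_colon (x := X v) ?_ ?_
  · rwa [SRIdeal_colon_X hΓ]
  · rwa [SRIdeal_sup_span_X]

end StanleyReisner

section Depth

variable {A M : Type} [CommRing A] [IsNoetherianRing A] [AddCommGroup M] [Module A M]
  [Module.Finite A M] {J : Ideal A}

lemma DepthGE.le_mdim [J.IsMaximal] {k : ℕ} (h : DepthGE J k M)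
    (hM : Module.annihilator A M ≤ J) : k ≤ mdim A M := by
  rw [mdim, ← Module.supportDim_eq_ringKrullDim_quotient_annihilator]
  exact h.le_supportDim_of_injective LinearMap.id Function.injective_id hM

lemma depth_le_mdim [J.IsMaximal] (hM : Module.annihilator A M ≤ J) :
    (depth J M : WithBot ℕ∞) ≤ mdim A M := by
  have hnonneg : ((0 : ℕ) : WithBot ℕ∞) ≤ mdim A M := DepthGE.zero.le_mdim hM
  obtain ⟨m, hm⟩ := WithBot.ne_bot_iff_exists.mp (ne_bot_of_le_ne_bot WithBot.coe_ne_bot hnonneg)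
  rw [← hm, WithBot.coe_le_coe]
  refine ENat.forall_natCast_le_iff_le.mp fun k hk => ?_
  have hkm : (k : WithBot ℕ∞) ≤ mdim A M := (DepthGE.of_le_depth hk).le_mdim hM
  rw [← hm] at hkm
  exact_mod_cast hkm

end Depth

section CohenMacaulay

variable {n : ℕ} {K : Type} [Field K] {M : Type} [AddCommGroup M]
  [Module (MvPolynomial (Fin n) K) M]

lemma IsCMMod.depthGE (h : IsCMMod n K M) {k : ℕ}
    (hk : k ≤ mdim (MvPolynomial (Fin n) K) M) : DepthGE (mIdeal n K) k M := by
  rw [← show _ = _ from h] at hk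
  exact DepthGE.of_le_depth (by exact_mod_cast hk)

lemma isCMMod_of_depthGE_of_mdim_le [Module.Finite (MvPolynomial (Fin n) K) M]
    (hM : Module.annihilator (MvPolynomial (Fin n) K) M ≤ mIdeal n K) {d : ℕ}
    (h : DepthGE (mIdeal n K) d M) (hd : mdim (MvPolynomial (Fin n) K) M ≤ d) :
    IsCMMod n K M ∧ mdim (MvPolynomial (Fin n) K) M = d := by
  have hdepth : (d : WithBot ℕ∞) ≤ depth (mIdeal n K) M := by
    exact_mod_cast h.le_depth (smul_top_lt_top hM)
  exact ⟨(depth_le_mdim hM).antisymm (hd.trans hdepth), hd.antisymm (h.le_mdim hM)⟩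

lemma isSeqCMMod_of_monotone {g : ℕ → Submodule (MvPolynomial (Fin n) K) M} (hg : Monotone g)
    (hzero : g 0 = ⊥) {k : ℕ} (htop : g k = ⊤)
    (h : ∀ i, g i < g (i + 1) →
      IsCMMod n K (g (i + 1) ⧸ (g i).submoduleOf (g (i + 1))) ∧
      mdim (MvPolynomial (Fin n) K) (g (i + 1) ⧸ (g i).submoduleOf (g (i + 1))) = i) :
    IsSeqCMMod n K M := by
  obtain ⟨r, f, e, hf, he, hfzero, hflast, hstep⟩ := exists_strictMono_of_monotone hg k
  have hCM : ∀ j : Fin r, IsCMMod n K (f j.succ ⧸ (f j.castSucc).submoduleOf (f j.succ)) ∧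
      mdim (MvPolynomial (Fin n) K) (f j.succ ⧸ (f j.castSucc).submoduleOf (f j.succ)) = e j := by
    intro j
    have hlt := hf j.castSucc_lt_succ
    rw [(hstep j).2.1, (hstep j).2.2] at hlt ⊢
    exact h (e j) hlt
  refine ⟨r, f, hfzero.trans hzero, hflast.trans htop, hf, fun j => (hCM j).1, fun i j hij => ?_⟩
  refine (hCM i).2.trans_lt (lt_of_lt_of_eq ?_ (hCM j).2.symm)
  exact_mod_cast he hij

end CohenMacaulay

section DimensionFiltration

variable {n : ℕ} {K : Type} [Field K] {Δ : Set (Finset (Fin n))} {i : ℕ}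

/-- The `i`-th step of the dimension filtration of `K[Δ] = R ⧸ I_Δ`: its largest submodule of
dimension less than `i`. It is written down through the facets of `Δ` with at least `i` vertices,
so that its quotient is the Stanley-Reisner ring of the subcomplex they generate. -/
noncomputable def dimFiltration (n : ℕ) (K : Type) [Field K] (Δ : Set (Finset (Fin n))) (i : ℕ) :
    Submodule (MvPolynomial (Fin n) K) (MvPolynomial (Fin n) K ⧸ SRIdeal n K Δ) :=
  Submodule.map (SRIdeal n K Δ).mkQ (SRIdeal n K (facetC Δ (Set.Ici i)))

lemma mkQ_mem_dimFiltration_iff (hΔ : IsLowerSet Δ) {p : MvPolynomial (Fin n) K} :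
    (SRIdeal n K Δ).mkQ p ∈ dimFiltration n K Δ i ↔
      p ∈ SRIdeal n K (facetC Δ (Set.Ici i)) := by
  rw [← Submodule.mem_comap, dimFiltration, Submodule.comap_map_mkQ,
    sup_eq_right.mpr (SRIdeal_anti (facetC_subset hΔ _))]

lemma dimFiltration_mono : Monotone (dimFiltration n K Δ) :=
  fun _ _ hij => Submodule.map_mono (SRIdeal_anti (facetC_mono (Set.Ici_subset_Ici.mpr hij)))

lemma dimFiltration_zero (hΔ : IsLowerSet Δ) : dimFiltration n K Δ 0 = ⊥ := by
  rw [dimFiltration, ← Nat.bot_eq_zero, Set.Ici_bot, facetC_univ hΔ, Submodule.mkQ_map_self]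

lemma dimFiltration_succ_eq_top : dimFiltration n K Δ (n + 1) = ⊤ := by
  rw [dimFiltration, facetC_Ici_succ_eq_empty, SRIdeal_empty, Submodule.map_top,
    Submodule.range_mkQ]

lemma depthGE_quotient_dimFiltration_iff (hΔ : IsLowerSet Δ) {k : ℕ} :
    DepthGE (mIdeal n K) k ((MvPolynomial (Fin n) K ⧸ SRIdeal n K Δ) ⧸ dimFiltration n K Δ i) ↔
      DepthGE (mIdeal n K) k (MvPolynomial (Fin n) K ⧸ SRIdeal n K (facetC Δ (Set.Ici i))) :=
  let e := Submodule.quotientQuotientEquivQuotient (SRIdeal n K Δ) _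
    (SRIdeal_anti (facetC_subset hΔ (Set.Ici i)))
  ⟨DepthGE.of_linearEquiv e, DepthGE.of_linearEquiv e.symm⟩

lemma SRIdeal_le_annihilator_dimFiltration (hΔ : IsLowerSet Δ) :
    SRIdeal n K (facetC Δ (Set.Iio i)) ≤
      Module.annihilator (MvPolynomial (Fin n) K) (dimFiltration n K Δ i) := by
  rw [← Set.compl_Ici]
  intro a ha
  refine Module.mem_annihilator.mpr fun ⟨_, p, hp, hpx⟩ => Subtype.ext ?_
  subst hpx
  have hap : a * p ∈ SRIdeal n K Δ := by
    rw [mul_comm]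
    exact SRIdeal_facetC_mul_SRIdeal_facetC_compl_le hΔ _ (Ideal.mul_mem_mul hp ha)
  exact (Submodule.Quotient.mk_eq_zero _).mpr hap

lemma mdim_dimFiltration_succ_subquotient_le (hΔ : IsLowerSet Δ)
    (N : Submodule (MvPolynomial (Fin n) K) (MvPolynomial (Fin n) K ⧸ SRIdeal n K Δ)) :
    mdim (MvPolynomial (Fin n) K)
      (dimFiltration n K Δ (i + 1) ⧸ N.submoduleOf (dimFiltration n K Δ (i + 1))) ≤ i := by
  have hle := (SRIdeal_le_annihilator_dimFiltration (K := K) (i := i + 1) hΔ).trans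
    (annihilator_le_annihilator_subquotient (N := N))
  refine (ringKrullDim_le_of_surjective _ (Ideal.Quotient.factor_surjective hle)).trans
    (ringKrullDim_quotient_SRIdeal_le ?_)
  rintro G ⟨F, -, hF, hGF⟩
  exact (Finset.card_le_card hGF).trans (Nat.lt_succ_iff.mp hF)

lemma annihilator_subquotient_dimFiltration_le_mIdeal (hΔ : IsLowerSet Δ)
    {N : Submodule (MvPolynomial (Fin n) K) (MvPolynomial (Fin n) K ⧸ SRIdeal n K Δ)}
    (hN : ¬ N ≤ dimFiltration n K Δ i) :
    Module.annihilator (MvPolynomial (Fin n) K)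
      (N ⧸ (dimFiltration n K Δ i).submoduleOf N) ≤ mIdeal n K := by
  intro s hs
  by_contra hsm
  refine hN fun x hx => ?_
  have hsx : s • x ∈ dimFiltration n K Δ i :=
    (Submodule.Quotient.mk_eq_zero ((dimFiltration n K Δ i).submoduleOf N)).mp
      (Module.mem_annihilator.mp hs (Submodule.Quotient.mk ⟨x, hx⟩))
  obtain ⟨p, rfl⟩ := Submodule.mkQ_surjective _ x
  rw [← map_smul, mkQ_mem_dimFiltration_iff hΔ] at hsx
  exact (mkQ_mem_dimFiltration_iff hΔ).mpr (mem_SRIdeal_of_mul_mem (isLowerSet_facetC _) hsm hsx)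

lemma le_dimFiltration_of_not_annihilator_le (hΔ : IsLowerSet Δ)
    {N : Submodule (MvPolynomial (Fin n) K) (MvPolynomial (Fin n) K ⧸ SRIdeal n K Δ)}
    (hN : ∀ F : Finset (Fin n), i ≤ F.card →
      ¬ Module.annihilator (MvPolynomial (Fin n) K) N ≤ facePrime n K F) :
    N ≤ dimFiltration n K Δ i := by
  intro x hx
  obtain ⟨p, rfl⟩ := Submodule.mkQ_surjective _ x
  rw [mkQ_mem_dimFiltration_iff hΔ, mem_SRIdeal_iff_facePrime (isLowerSet_facetC _)]
  rintro G ⟨F, hF, hi, hGF⟩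
  obtain ⟨a, ha, haF⟩ := SetLike.not_le_iff_exists.mp (hN F hi)
  have hap : a * p ∈ SRIdeal n K Δ := (Submodule.Quotient.mk_eq_zero _).mp
    (congrArg Subtype.val (Module.mem_annihilator.mp ha ⟨_, hx⟩))
  have hpF : p ∈ facePrime n K F := ((facePrime_isPrime F).mem_or_mem
    ((mem_SRIdeal_iff_facePrime hΔ).mp hap F hF.1)).resolve_left haF
  exact facePrime_anti hGF hpF

-- In a sequentially Cohen-Macaulay filtration, the part of dimension less than `i` and the `i`-th
-- step of the dimension filtration agree after localizing at the irrelevant ideal.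
lemma IsSeqCMMod.depthGE_facetC (hΔ : IsLowerSet Δ)
    (h : IsSeqCMMod n K (MvPolynomial (Fin n) K ⧸ SRIdeal n K Δ)) (i : ℕ) :
    DepthGE (mIdeal n K) i (MvPolynomial (Fin n) K ⧸ SRIdeal n K (facetC Δ (Set.Ici i))) := by
  cases i with
  | zero => exact DepthGE.zero
  | succ i =>
    obtain ⟨r, f, hzero, hlast, hf, hCM, hdim⟩ := h
    obtain ⟨c, hlow, hhigh⟩ := exists_threshold (StrictMono.monotone fun j l => hdim j l)
      ((i + 1 : ℕ) : WithBot ℕ∞)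
    have hdepth : DepthGE (mIdeal n K) (i + 1) ((MvPolynomial (Fin n) K ⧸ SRIdeal n K Δ) ⧸ f c) :=
      DepthGE.quotient_of_filtration hf.monotone hlast c
        fun j hj => (hCM j).depthGE (hhigh j hj)
    have hc : f c ≤ dimFiltration n K Δ (i + 1) := by
      refine le_dimFiltration_of_not_annihilator_le hΔ fun F hF =>
        not_annihilator_le_of_filtration hzero c fun j hj hle => ?_
      have hFj := ringKrullDim_le_of_surjective _ (Ideal.Quotient.factor_surjective hle)
      rw [ringKrullDim_quotient_facePrime] at hFj
      have hFi : F.card < i + 1 := by exact_mod_cast hFj.trans_lt (hlow j hj)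
      exact hF.not_gt hFi
    obtain ⟨s, hs, hsm⟩ : ∃ s ∈ Module.annihilator (MvPolynomial (Fin n) K)
        (dimFiltration n K Δ (i + 1) ⧸ (f c).submoduleOf (dimFiltration n K Δ (i + 1))),
        s ∉ mIdeal n K := by
      refine SetLike.not_le_iff_exists.mp fun hle => ?_
      have hge := hdepth.le_supportDim_of_injective _ mapQ_subtype_injective hle
      rw [Module.supportDim_eq_ringKrullDim_quotient_annihilator] at hge
      have hi : i + 1 ≤ i := by
        exact_mod_cast hge.trans (mdim_dimFiltration_succ_subquotient_le hΔ (f c))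
      exact i.not_succ_le_self hi
    exact (depthGE_quotient_dimFiltration_iff hΔ).mp (DepthGE.quotient_of_le hc
      (DepthGE.of_smul_eq_zero hsm (Module.mem_annihilator.mp hs)) hdepth)

lemma isSeqCMMod_of_depthGE_facetC (hΔ : IsLowerSet Δ)
    (h : ∀ i, DepthGE (mIdeal n K) i
      (MvPolynomial (Fin n) K ⧸ SRIdeal n K (facetC Δ (Set.Ici i)))) :
    IsSeqCMMod n K (MvPolynomial (Fin n) K ⧸ SRIdeal n K Δ) := by
  have hdepth : ∀ i, DepthGE (mIdeal n K) i
      ((MvPolynomial (Fin n) K ⧸ SRIdeal n K Δ) ⧸ dimFiltration n K Δ i) :=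
    fun i => (depthGE_quotient_dimFiltration_iff hΔ).mpr (h i)
  refine isSeqCMMod_of_monotone dimFiltration_mono (dimFiltration_zero hΔ)
    dimFiltration_succ_eq_top fun i hi => ?_
  exact isCMMod_of_depthGE_of_mdim_le
    (annihilator_subquotient_dimFiltration_le_mIdeal hΔ hi.not_ge)
    (DepthGE.subquotient hi.le (hdepth i) ((hdepth (i + 1)).mono (by omega)))
    (mdim_dimFiltration_succ_subquotient_le hΔ _)

theorem isSeqCMMod_SRIdeal_iff (hΔ : IsLowerSet Δ) :
    IsSeqCMMod n K (MvPolynomial (Fin n) K ⧸ SRIdeal n K Δ) ↔ ∀ i, DepthGE (mIdeal n K) i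
      (MvPolynomial (Fin n) K ⧸ SRIdeal n K (facetC Δ (Set.Ici i))) :=
  ⟨fun h => h.depthGE_facetC hΔ, isSeqCMMod_of_depthGE_facetC hΔ⟩

end DimensionFiltration

theorem statement_4_general (n : ℕ) (K : Type) [Field K] (Δ : Set (Finset (Fin n)))
    (hΔ : IsComplex Δ) (v : Fin n) (hv : IsSheddingVertex Δ v)
    (hlink : IsSeqCMMod n K (MvPolynomial (Fin n) K ⧸ SRIdeal n K (linkC Δ v)))
    (hdel : IsSeqCMMod n K (MvPolynomial (Fin n) K ⧸ SRIdeal n K (delC Δ v))) :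
    IsSeqCMMod n K (MvPolynomial (Fin n) K ⧸ SRIdeal n K Δ) := by
  have hlower := hΔ.isLowerSet
  rw [isSeqCMMod_SRIdeal_iff (isLowerSet_linkC hlower)] at hlink
  rw [isSeqCMMod_SRIdeal_iff (isLowerSet_delC hlower)] at hdel
  rw [isSeqCMMod_SRIdeal_iff hlower]
  rintro (_ | i)
  · exact DepthGE.zero
  · refine DepthGE.of_linkC_delC (isLowerSet_facetC _) v ?_ ?_
    · rw [linkC_facetC_Ici_succ hlower]
      exact hlink i
    · rw [hv.delC_facetC_Ici hlower]
      exact hdel (i + 1)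

/-- If `Δ` has a shedding vertex `v` such that `link_Δ(v)` and `del_Δ(v)` are both
sequentially Cohen-Macaulay, then `Δ` is sequentially Cohen-Macaulay. -/
theorem statement_4 (n : ℕ) (K : Type) [Field K] (Δ : Set (Finset (Fin n)))
    (hΔ : IsComplex Δ) (hvert : ∀ u : Fin n, {u} ∈ Δ) (v : Fin n)
    (hv : IsSheddingVertex Δ v)
    (hlink : IsSeqCMMod n K (MvPolynomial (Fin n) K ⧸ SRIdeal n K (linkC Δ v)))
    (hdel : IsSeqCMMod n K (MvPolynomial (Fin n) K ⧸ SRIdeal n K (delC Δ v))) :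
    IsSeqCMMod n K (MvPolynomial (Fin n) K ⧸ SRIdeal n K Δ) :=
  statement_4_general n K Δ hΔ v hv hlink hdel

end Paper
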